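/- A prime right nonsingular ring R such that R_R is automorphism-invariant is right self-injective. -/

import Mathlib

universe u v w

section Defs

variable {R : Type u} [Ring R]

/-- `N` is an essential submodule of `M`. -/
def EssentialSub {M : Type v} [AddCommGroup M] [Module R M] (N : Submodule R M) : Prop :=
  ∀ K : Submodule R M, K ⊓ N = ⊥ → K = ⊥

/-- `N` is essential in `P` (both submodules of `M`, `N ≤ P`). -/
def EssentialIn {M : Type v} [AddCommGroup M] [Module R M] (N P : Submodule R M) : Prop :=
  N ≤ P ∧ ∀ K : Submodule R M, K ≤ P → K ⊓ N = ⊥ → K = ⊥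

/-- `N` is a closed submodule of `M`: it has no proper essential extension in `M`. -/
def ClosedSub {M : Type v} [AddCommGroup M] [Module R M] (N : Submodule R M) : Prop :=
  ∀ P : Submodule R M, EssentialIn N P → N = P

/-- `i : M →ₗ[R] E` realizes `E` as an injective hull of `M`. -/
structure IsInjectiveHull {M : Type v} {E : Type w} [AddCommGroup M] [Module R M]
    [AddCommGroup E] [Module R E] (i : M →ₗ[R] E) : Prop where
  inj : Function.Injective i
  injE : Module.Injective R E
  ess : EssentialSub (LinearMap.range i)

/-- `M` is invariant under every automorphism of the hull `E` given by `i`. -/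
def HullAutInv {M : Type v} {E : Type w} [AddCommGroup M] [Module R M]
    [AddCommGroup E] [Module R E] (i : M →ₗ[R] E) : Prop :=
  ∀ g : E ≃ₗ[R] E, ∀ m : M, g (i m) ∈ LinearMap.range i

end Defs

/-- `M` is automorphism-invariant: invariant under all automorphisms of its injective hull. -/
def AutInvariant (R : Type u) [Ring R] (M : Type v) [AddCommGroup M] [Module R M] : Prop :=
  ∀ (E : Type v) [AddCommGroup E] [Module R E] (i : M →ₗ[R] E),
    IsInjectiveHull i → HullAutInv i

/-- Every monomorphism from a submodule of `M` into `M` extends to an endomorphism of `M`. -/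
def PseudoInjective (R : Type u) [Ring R] (M : Type v) [AddCommGroup M] [Module R M] : Prop :=
  ∀ (A : Submodule R M) (f : A →ₗ[R] M), Function.Injective f →
    ∃ g : M →ₗ[R] M, ∀ a : A, g a = f a

/-- Every homomorphism from a submodule of `M` into `M` extends to an endomorphism of `M`. -/
def QuasiInjective (R : Type u) [Ring R] (M : Type v) [AddCommGroup M] [Module R M] : Prop :=
  ∀ (A : Submodule R M) (f : A →ₗ[R] M), ∃ g : M →ₗ[R] M, ∀ a : A, g a = f a

/-- `X` is `Y`-injective. -/
def RelInjective (R : Type u) [Ring R] (X : Type v) (Y : Type w) [AddCommGroup X] [Module R X]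
    [AddCommGroup Y] [Module R Y] : Prop :=
  ∀ (A : Submodule R Y) (f : A →ₗ[R] X), ∃ g : Y →ₗ[R] X, ∀ a : A, g a = f a

/-- `M` contains no direct sum of two nonzero isomorphic submodules. -/
def SquareFreeMod (R : Type u) [Ring R] (M : Type v) [AddCommGroup M] [Module R M] : Prop :=
  ∀ (A B : Submodule R M), A ⊓ B = ⊥ → Nonempty (A ≃ₗ[R] B) → A = ⊥

/-- `X` and `Y` have no nonzero isomorphic submodules. -/
def OrthogonalMod (R : Type u) [Ring R] (X : Type v) (Y : Type w) [AddCommGroup X] [Module R X]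
    [AddCommGroup Y] [Module R Y] : Prop :=
  ∀ (A : Submodule R X) (B : Submodule R Y), Nonempty (A ≃ₗ[R] B) → A = ⊥

/-- No nonzero element of `M` is annihilated by an essential (right) ideal of `R`. -/
def NonsingularMod (R : Type u) [Ring R] (M : Type v) [AddCommGroup M] [Module R M] : Prop :=
  ∀ m : M, EssentialSub (LinearMap.ker (LinearMap.toSpanSingleton R M m)) → m = 0

/-!
Let `E` be the injective hull of `R_R`. It is nonsingular because `R_R` is, so `S = End(E)` is von
Neumann regular: endomorphisms of `E` agree as soon as they agree on an essential submodule. The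
ring `S` is also prime, because `R` is.

Choose a maximal isomorphism between two independent submodules of `E`. Extending it to `E` gives
`E = X ⊕ X' ⊕ Y` with `X ≅ X'`, and by maximality and regularity the ring `End(Y)` is reduced. As
`S` is prime and regular, `End(Y)` is then zero or a division ring, and if `X ≠ 0` then `Y` embeds
in `X` as a direct summand. If `X = 0`, every nonzero endomorphism of `E` is a unit. Otherwise each
of `X`, `X'`, `Y` is isomorphic to an independent direct summand of `E`, and every endomorphism of
`E` is a combination of elements of square zero. Since `1 + x` is a unit when `x ^ 2 = 0`, in both
cases the only subring of `S` containing all units is `S` itself.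

The endomorphisms preserving `R` form a subring of `S`, which contains all units by assumption.
Hence every endomorphism of `E` preserves `R`. But any `x : E` is the image of `1` under some
endomorphism, so `E = R`.
-/

section Essential

theorem exists_maximal_disjoint {α : Type*} [CompleteLattice α] [IsCompactlyGenerated α] {a b : α}
    (h : Disjoint a b) : ∃ c, b ≤ c ∧ Maximal (Disjoint a) c :=
  zorn_le_nonempty₀ {c | Disjoint a c}
    (fun s hs hchain _ _ =>
      ⟨sSup s, hchain.directedOn.disjoint_sSup_right.2 hs, fun _ => le_sSup⟩) b h

variable {A : Type u} [Ring A] {M : Type v} [AddCommGroup M] [Module A M]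
variable {L : Type w} [AddCommGroup L] [Module A L] {N K P : Submodule A M}

theorem EssentialSub.mono (hN : EssentialSub N) (h : N ≤ P) : EssentialSub P := fun X hX =>
  hN X (disjoint_iff.1 ((disjoint_iff.2 hX).mono_right h))

theorem EssentialSub.exists_mem_ne_zero (hN : EssentialSub N) (hK : K ≠ ⊥) :
    ∃ x ∈ K, x ∈ N ∧ x ≠ 0 := by
  obtain ⟨x, ⟨hxK, hxN⟩, hx⟩ := Submodule.exists_mem_ne_zero_of_ne_bot (mt (hN K) hK)
  exact ⟨x, hxK, hxN, hx⟩

theorem EssentialSub.comap (hN : EssentialSub N) (f : L →ₗ[A] M) :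
    EssentialSub (N.comap f) := by
  intro X hX
  by_contra hX0
  have hmap : X.map f ≠ ⊥ := fun h =>
    have hle : X ≤ N.comap f := Submodule.map_le_iff_le_comap.1 (h.le.trans bot_le)
    hX0 (inf_eq_left.2 hle ▸ hX)
  obtain ⟨_, ⟨x, hx, rfl⟩, hfx, hfx0⟩ := hN.exists_mem_ne_zero hmap
  have hx0 : x = 0 := (Submodule.mem_bot A).1 (hX ▸ ⟨hx, hfx⟩)
  exact hfx0 (by rw [hx0, map_zero])

theorem essentialSub_sup_of_maximal_disjoint (h : Maximal (Disjoint N) K) :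
    EssentialSub (N ⊔ K) := by
  intro X hX
  have hdisj : Disjoint (N ⊔ K) X := (disjoint_iff.2 hX).symm
  have hXK : X ≤ K := le_sup_right.trans
    (h.2 (h.1.disjoint_sup_right_of_disjoint_sup_left hdisj) le_sup_left)
  exact disjoint_self.1 (hdisj.mono_left (hXK.trans le_sup_right))

theorem essentialIn_of_maximal_disjoint (h : Maximal (Disjoint N) K) (hNP : N ≤ P)
    (hKP : Disjoint K P) : EssentialIn N P := by
  refine ⟨hNP, fun X hXP hX => ?_⟩
  have hXK : X ≤ K := le_sup_left.trans (h.2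
    ((disjoint_iff.2 hX).symm.disjoint_sup_right_of_disjoint_sup_left
      (hKP.symm.mono_left (sup_le hNP hXP))) le_sup_right)
  exact disjoint_self.1 (hKP.mono hXK hXP)

theorem EssentialIn.essentialSub_submoduleOf (h : EssentialIn N P) :
    EssentialSub (N.submoduleOf P) := by
  intro X hX
  have hmap : X.map P.subtype = ⊥ := by
    refine h.2 _ (Submodule.map_subtype_le P X) (disjoint_iff.1 (Submodule.disjoint_def.2 ?_))
    rintro _ ⟨x, hxX, rfl⟩ hxN
    exact congrArg P.subtype (Submodule.disjoint_def.1 (disjoint_iff.2 hX) x hxX hxN)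
  exact Submodule.map_injective_of_injective P.injective_subtype
    (hmap.trans (Submodule.map_bot _).symm)

end Essential

section Injective

variable {A : Type u} [Ring A] {E : Type v} [AddCommGroup E] [Module A E]
variable [Module.Injective A E]

theorem injective_of_isProj {P : Submodule A E} {π : E →ₗ[A] E} (hπ : LinearMap.IsProj P π) :
    Module.Injective A P where
  out X Y _ _ _ _ f hf g := by
    obtain ⟨h, hh⟩ := Module.Injective.out f hf (P.subtype ∘ₗ g)
    exact ⟨hπ.codRestrict ∘ₗ h, fun x => by
      rw [LinearMap.comp_apply, hh]; exact hπ.codRestrict_apply_cod (g x)⟩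

variable [Small.{v} A]

theorem exists_extension_vanishing_on {L : Type*} [AddCommGroup L] [Module A L] {M : Type*}
    [AddCommGroup M] [Module A M] {j : L →ₗ[A] M} (hj : Function.Injective j) {K : Submodule A M}
    (hK : Disjoint (LinearMap.range j) K) (φ : L →ₗ[A] E) :
    ∃ g : M →ₗ[A] E, (∀ l, g (j l) = φ l) ∧ ∀ x ∈ K, g x = 0 := by
  have hinj : Function.Injective (j.coprod K.subtype) := by
    rw [← LinearMap.ker_eq_bot, LinearMap.ker_coprod_of_disjoint_range _ _ (by simpa using hK),
      LinearMap.ker_eq_bot.2 hj, Submodule.ker_subtype, Submodule.prod_bot]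
  obtain ⟨g, hg⟩ := Module.Injective.extension_property A E _ _ _ hinj (φ ∘ₗ LinearMap.fst A L K)
  refine ⟨g, fun l => ?_, fun x hx => ?_⟩
  · simpa using LinearMap.congr_fun hg (l, 0)
  · simpa using LinearMap.congr_fun hg (0, ⟨x, hx⟩)

theorem exists_isProj_of_maximal_disjoint {P K : Submodule A E} (hP : Maximal (Disjoint K) P)
    (hK : Maximal (Disjoint P) K) : ∃ π : E →ₗ[A] E, LinearMap.IsProj P π := by
  obtain ⟨π, hπP, hπK⟩ := exists_extension_vanishing_on (E := E) P.injective_subtype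
    (by simpa using hK.1) P.subtype
  have hπP' : ∀ x ∈ P, π x = x := fun x hx => hπP ⟨x, hx⟩
  have hcomap : K.comap π ≤ K := by
    refine hK.2 (Submodule.disjoint_def.2 fun x hxP hx => ?_) fun x hx => by simp [hπK x hx]
    rw [Submodule.mem_comap, hπP' x hxP] at hx
    exact Submodule.disjoint_def.1 hK.1 x hxP hx
  have hrange : LinearMap.range π ≤ P := by
    refine hP.2 (Submodule.disjoint_def.2 ?_) fun x hx => ⟨x, hπP' x hx⟩
    rintro _ hxK ⟨x, rfl⟩
    exact hπK x (hcomap hxK)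
  exact ⟨π, fun x => hrange ⟨x, rfl⟩, hπP'⟩

end Injective

theorem exists_isInjectiveHull (A : Type u) [Ring A] (M : Type u) [AddCommGroup M] [Module A M] :
    ∃ (E : Type u) (_ : AddCommGroup E) (_ : Module A E) (i : M →ₗ[A] E), IsInjectiveHull i := by
  obtain ⟨I⟩ := CategoryTheory.EnoughInjectives.presentation (ModuleCat.of A M)
  have : Module.Injective A I.J := (Module.injective_iff_injective_object A I.J).2 I.injective
  let f : M →ₗ[A] I.J := I.f.hom
  have hf : Function.Injective f := (ModuleCat.mono_iff_injective I.f).1 I.mono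
  obtain ⟨K, -, hK⟩ := exists_maximal_disjoint (disjoint_bot_right (a := LinearMap.range f))
  obtain ⟨E, hfE, hE⟩ := exists_maximal_disjoint hK.1.symm
  have hK' : Maximal (Disjoint E) K :=
    ⟨hE.1.symm, fun X hX => hK.2 (hX.mono_left hfE)⟩
  obtain ⟨π, hπ⟩ := exists_isProj_of_maximal_disjoint hE hK'
  let i : M →ₗ[A] E := f.codRestrict E fun x => hfE ⟨x, rfl⟩
  refine ⟨E, inferInstance, inferInstance, i, ?_, injective_of_isProj hπ, ?_⟩
  · exact fun x y hxy => hf (congrArg Subtype.val hxy)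
  · rw [LinearMap.range_codRestrict]
    exact (essentialIn_of_maximal_disjoint hK hfE hE.1).essentialSub_submoduleOf

section Nonsingular

variable {A : Type u} [Ring A] {M : Type v} {E : Type w} [AddCommGroup M] [Module A M]
variable [AddCommGroup E] [Module A E]

theorem NonsingularMod.of_essentialSub_range (hM : NonsingularMod A M) {i : M →ₗ[A] E}
    (hi : Function.Injective i) (hess : EssentialSub (LinearMap.range i)) :
    NonsingularMod A E := by
  intro y hy
  by_contra hy0
  obtain ⟨_, hz, ⟨m, rfl⟩, hm0⟩ :=
    hess.exists_mem_ne_zero (mt Submodule.span_singleton_eq_bot.1 hy0)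
  obtain ⟨r, hr⟩ := Submodule.mem_span_singleton.1 hz
  have hm : m = 0 := by
    refine hM m ((hy.comap (LinearMap.toSpanSingleton A A r)).mono fun t ht => hi ?_)
    simpa [mul_smul, hr] using ht
  exact hm0 (by rw [hm, map_zero])

theorem NonsingularMod.linearMap_ext (hE : NonsingularMod A E) {N : Submodule A M}
    (hN : EssentialSub N) {s t : M →ₗ[A] E} (h : N ≤ LinearMap.eqLocus s t) : s = t := by
  ext x
  refine sub_eq_zero.1 (hE _ ((hN.comap (LinearMap.toSpanSingleton A M x)).mono fun r hr => ?_))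
  have hrx : s (r • x) = t (r • x) := h hr
  simpa [smul_sub, sub_eq_zero] using hrx

end Nonsingular

section Rings

variable {S : Type*} [Ring S]

/-- Primeness of a ring in terms of elements: `s S t = 0` only if `s = 0` or `t = 0`. -/
def ElementwisePrime (S : Type*) [Ring S] : Prop :=
  ∀ s t : S, (∀ u, s * u * t = 0) → s = 0 ∨ t = 0

/-- Von Neumann regularity of a ring: every element has an inner inverse. -/
def IsVonNeumannRegular (S : Type*) [Ring S] : Prop :=
  ∀ s : S, ∃ t, s * t * s = s

theorem elementwisePrime_of_twoSidedIdeal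
    (h : ∀ I J : TwoSidedIdeal S, (∀ x ∈ I, ∀ y ∈ J, x * y = 0) → I = ⊥ ∨ J = ⊥) :
    ElementwisePrime S := by
  intro s t hst
  have hs : ∀ x ∈ TwoSidedIdeal.span {s}, ∀ u, x * u * t = 0 := by
    intro x hx
    induction hx using TwoSidedIdeal.span_induction with
    | mem x hx => rwa [Set.mem_singleton_iff.1 hx]
    | zero => simp
    | add x y _ _ hx hy => simp [add_mul, hx, hy]
    | neg x _ hx => simp [hx]
    | left_absorb a x _ hx => simp [mul_assoc a, hx]
    | right_absorb a x _ hx => exact fun u => by rw [mul_assoc x, hx]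
  have ht : ∀ y ∈ TwoSidedIdeal.span {t}, ∀ x ∈ TwoSidedIdeal.span {s}, x * y = 0 := by
    intro y hy
    induction hy using TwoSidedIdeal.span_induction with
    | mem y hy => exact fun x hx => by simpa [Set.mem_singleton_iff.1 hy] using hs x hx 1
    | zero => simp
    | add x y _ _ hx hy => exact fun z hz => by rw [mul_add, hx z hz, hy z hz, add_zero]
    | neg x _ hx => exact fun z hz => by rw [mul_neg, hx z hz, neg_zero]
    | left_absorb a x _ hx =>
      exact fun z hz => by rw [← mul_assoc, hx _ (TwoSidedIdeal.mul_mem_right _ _ _ hz)]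
    | right_absorb a x _ hx => exact fun z hz => by rw [← mul_assoc, hx z hz, zero_mul]
  have hbot : ∀ z : S, TwoSidedIdeal.span {z} = ⊥ → z = 0 := fun z hz =>
    (TwoSidedIdeal.mem_bot S).1 (hz ▸ TwoSidedIdeal.subset_span rfl)
  exact (h _ _ fun x hx y hy => ht y hy x hx).imp (hbot s) (hbot t)

/-- `a` and `b` are off-diagonal matrix units `e₂₁` and `e₁₂`: they generate orthogonal idempotents
`b * a` and `a * b` and are mutually inverse isomorphisms between the corresponding summands. -/
structure IsMatrixUnitPair (a b : S) : Prop where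
  left_mul_self : a * a = 0
  right_mul_self : b * b = 0
  left_mul_right_mul_left : a * b * a = a
  right_mul_left_mul_right : b * a * b = b

/-- The idempotent complementary to the diagonal matrix units `b * a` and `a * b` of a pair of
off-diagonal matrix units. -/
def residualIdempotent (a b : S) : S := 1 - b * a - a * b

/-- The corner ring `d S d` of the idempotent `d` is reduced. Elements of the corner ring are
described as the `w : S` with `d * w = w` and `w * d = w`. -/
def IsReducedCorner (d : S) : Prop :=
  ∀ w, d * w = w → w * d = w → w * w = 0 → w = 0

namespace IsMatrixUnitPair

variable {a b v w : S}

theorem symm (h : IsMatrixUnitPair a b) : IsMatrixUnitPair b a :=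
  ⟨h.right_mul_self, h.left_mul_self, h.right_mul_left_mul_right, h.left_mul_right_mul_left⟩

theorem residualIdempotent_mul_left (h : IsMatrixUnitPair a b) :
    residualIdempotent a b * a = 0 := by
  simp [residualIdempotent, sub_mul, mul_assoc b, h.left_mul_self, h.left_mul_right_mul_left]

theorem residualIdempotent_mul_right (h : IsMatrixUnitPair a b) :
    residualIdempotent a b * b = 0 := by
  simp [residualIdempotent, sub_mul, mul_assoc a, h.right_mul_self, h.right_mul_left_mul_right]

theorem left_mul_residualIdempotent (h : IsMatrixUnitPair a b) :
    a * residualIdempotent a b = 0 := by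
  simp [residualIdempotent, mul_sub, ← mul_assoc, h.left_mul_self, h.left_mul_right_mul_left]

theorem right_mul_residualIdempotent (h : IsMatrixUnitPair a b) :
    b * residualIdempotent a b = 0 := by
  simp [residualIdempotent, mul_sub, ← mul_assoc, h.right_mul_self, h.right_mul_left_mul_right]

theorem isIdempotentElem_residualIdempotent (h : IsMatrixUnitPair a b) :
    IsIdempotentElem (residualIdempotent a b) := by
  change residualIdempotent a b * (1 - b * a - a * b) = residualIdempotent a b
  simp [mul_sub, ← mul_assoc, h.residualIdempotent_mul_left, h.residualIdempotent_mul_right]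

theorem add (h : IsMatrixUnitPair a b) (h' : IsMatrixUnitPair w v)
    (hdw : residualIdempotent a b * w = w) (hwd : w * residualIdempotent a b = w)
    (hdv : residualIdempotent a b * v = v) (hvd : v * residualIdempotent a b = v) :
    IsMatrixUnitPair (a + w) (b + v) ∧ (b + v) * (a + w) = b * a + v * w := by
  have haw : a * w = 0 := by rw [← hdw, ← mul_assoc, h.left_mul_residualIdempotent, zero_mul]
  have hav : a * v = 0 := by rw [← hdv, ← mul_assoc, h.left_mul_residualIdempotent, zero_mul]
  have hbw : b * w = 0 := by rw [← hdw, ← mul_assoc, h.right_mul_residualIdempotent, zero_mul]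
  have hbv : b * v = 0 := by rw [← hdv, ← mul_assoc, h.right_mul_residualIdempotent, zero_mul]
  have hwa : w * a = 0 := by rw [← hwd, mul_assoc, h.residualIdempotent_mul_left, mul_zero]
  have hwb : w * b = 0 := by rw [← hwd, mul_assoc, h.residualIdempotent_mul_right, mul_zero]
  have hva : v * a = 0 := by rw [← hvd, mul_assoc, h.residualIdempotent_mul_left, mul_zero]
  have hvb : v * b = 0 := by rw [← hvd, mul_assoc, h.residualIdempotent_mul_right, mul_zero]
  have hba : (b + v) * (a + w) = b * a + v * w := by
    rw [add_mul, mul_add, mul_add, hbw, hva, add_zero, zero_add]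
  refine ⟨⟨?_, ?_, ?_, ?_⟩, hba⟩
  · simp [add_mul, mul_add, h.left_mul_self, h'.left_mul_self, haw, hwa]
  · simp [add_mul, mul_add, h.right_mul_self, h'.right_mul_self, hbv, hvb]
  · rw [mul_assoc, hba]
    simp [add_mul, mul_add, ← mul_assoc, hav, hwb, h.left_mul_right_mul_left,
      h'.left_mul_right_mul_left]
  · have hbav : b * a * v = 0 := by rw [mul_assoc, hav, mul_zero]
    have hvwb : v * w * b = 0 := by rw [mul_assoc, hwb, mul_zero]
    simp [hba, add_mul, mul_add, hbav, hvwb, h.right_mul_left_mul_right,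
      h'.right_mul_left_mul_right]

theorem exists_of_mul_self_eq_zero (hS : IsVonNeumannRegular S) {d : S} (hd : IsIdempotentElem d)
    (hdw : d * w = w) (hwd : w * d = w) (hw : w * w = 0) :
    ∃ v, IsMatrixUnitPair w v ∧ d * v = v ∧ v * d = v := by
  obtain ⟨y, hdy, hyd, hwyw, hywy⟩ :
      ∃ y, d * y = y ∧ y * d = y ∧ w * y * w = w ∧ y * w * y = y := by
    obtain ⟨x, hx⟩ := hS w
    obtain ⟨z, hdz, hzd, hz⟩ : ∃ z, d * z = z ∧ z * d = z ∧ w * z * w = w :=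
      ⟨d * x * d, by simp only [← mul_assoc, hd.eq], by simp only [mul_assoc, hd.eq], by
        rw [← mul_assoc, ← mul_assoc, hwd, mul_assoc, hdw, hx]⟩
    refine ⟨z * w * z, ?_, ?_, ?_, ?_⟩
    · rw [← mul_assoc, ← mul_assoc, hdz]
    · rw [mul_assoc, hzd]
    · rw [← mul_assoc, ← mul_assoc, hz, hz]
    · calc z * w * z * w * (z * w * z) = z * (w * z * w * z * w) * z := by simp only [mul_assoc]
        _ = z * w * z := by rw [hz, hz]
  have hyw : (1 - y * w) * w = w := by rw [sub_mul, one_mul, mul_assoc, hw, mul_zero, sub_zero]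
  have hyy : (1 - y * w) * y = 0 := by rw [sub_mul, one_mul, hywy, sub_self]
  refine ⟨y * (1 - y * w), ⟨hw, ?_, ?_, ?_⟩, ?_, ?_⟩
  · rw [← mul_assoc, mul_assoc y, hyy, mul_zero, zero_mul]
  · rw [← mul_assoc, mul_assoc, hyw, hwyw]
  · rw [mul_assoc y, hyw, ← mul_assoc, hywy]
  · rw [← mul_assoc, hdy]
  · rw [mul_sub, sub_mul, mul_one, hyd, mul_assoc, mul_assoc y w d, hwd]

end IsMatrixUnitPair

section Corner

variable {d : S}

theorem IsReducedCorner.eq_zero_or_eq_zero_of_mul_eq_zero (hd : IsReducedCorner d)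
    (hS : ElementwisePrime S) {x y : S} (hx : x * d = x) (hy : d * y = y) (hxy : x * y = 0) :
    x = 0 ∨ y = 0 := by
  refine (hS y x fun u => hd _ ?_ ?_ ?_).symm
  · rw [← mul_assoc, ← mul_assoc, hy]
  · rw [mul_assoc, hx]
  · calc y * u * x * (y * u * x) = y * u * (x * y) * (u * x) := by simp only [mul_assoc]
      _ = 0 := by rw [hxy, mul_zero, zero_mul]

theorem IsReducedCorner.exists_mul_eq (hd : IsReducedCorner d) (hS : ElementwisePrime S)
    (hreg : IsVonNeumannRegular S) (hdd : IsIdempotentElem d) {h : S} (h0 : h ≠ 0)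
    (hhd : h * d = h) : ∃ c, c * h = d := by
  obtain ⟨x, hx⟩ := hreg h
  have hzero : d - d * x * h = 0 := by
    refine (hd.eq_zero_or_eq_zero_of_mul_eq_zero hS hhd ?_ ?_).resolve_left h0
    · rw [mul_sub, mul_assoc d, ← mul_assoc, hdd.eq]
    · rw [mul_sub, mul_assoc d, ← mul_assoc, hhd, ← mul_assoc, hx, sub_self]
  exact ⟨d * x, (sub_eq_zero.1 hzero).symm⟩

theorem IsReducedCorner.isUnit_of_ne_zero (h1 : IsReducedCorner (1 : S)) (hS : ElementwisePrime S)
    (hreg : IsVonNeumannRegular S) {s : S} (hs : s ≠ 0) : IsUnit s := by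
  have : NoZeroDivisors S := ⟨h1.eq_zero_or_eq_zero_of_mul_eq_zero hS (mul_one _) (one_mul _)⟩
  obtain ⟨c, hc⟩ := h1.exists_mul_eq hS hreg .one hs (mul_one s)
  exact .of_mul_eq_one_right c hc

theorem IsMatrixUnitPair.exists_mul_eq_residualIdempotent {a b : S} (h : IsMatrixUnitPair a b)
    (hd : IsReducedCorner (residualIdempotent a b)) (hS : ElementwisePrime S)
    (hreg : IsVonNeumannRegular S) (ha : a ≠ 0) :
    ∃ c e, IsMatrixUnitPair c e ∧ e * c = residualIdempotent a b := by
  have hdd := h.isIdempotentElem_residualIdempotent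
  have hda := h.residualIdempotent_mul_left
  generalize residualIdempotent a b = d at *
  by_cases hd0 : d = 0
  · exact ⟨0, 0, ⟨by simp, by simp, by simp, by simp⟩, by simp [hd0]⟩
  obtain ⟨u, hu⟩ : ∃ u, a * u * d ≠ 0 := by
    by_contra! haud
    exact (hS a d haud).elim ha hd0
  obtain ⟨c, hc⟩ := hd.exists_mul_eq hS hreg hdd hu (by rw [mul_assoc, hdd.eq])
  have hdu : d * (a * u * d) = 0 := by rw [← mul_assoc, ← mul_assoc, hda, zero_mul, zero_mul]
  have hec : d * c * (1 - d) * (a * u * d) = d := by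
    rw [mul_assoc, sub_mul, one_mul, hdu, sub_zero, mul_assoc, hc, hdd.eq]
  refine ⟨a * u * d, d * c * (1 - d), ⟨?_, ?_, ?_, ?_⟩, hec⟩
  · rw [mul_assoc (a * u), hdu, mul_zero]
  · rw [mul_assoc (d * c), ← mul_assoc (1 - d), ← mul_assoc (1 - d), hdd.one_sub_mul_self,
      zero_mul, zero_mul, mul_zero]
  · rw [mul_assoc, hec, mul_assoc, hdd.eq]
  · rw [hec, ← mul_assoc, ← mul_assoc, hdd.eq]

end Corner

section UnitSubring

variable {T : Subring S} {a b : S}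

theorem mem_of_mul_self_eq_zero (hT : ∀ u : Sˣ, (u : S) ∈ T) {x : S} (hx : x * x = 0) :
    x ∈ T := by
  have h := hT ⟨1 + x, 1 - x, by simp [mul_sub, add_mul, hx], by simp [mul_add, sub_mul, hx]⟩
  simpa using T.sub_mem h T.one_mem

theorem IsMatrixUnitPair.mul_mem (h : IsMatrixUnitPair a b) (hT : ∀ u : Sˣ, (u : S) ∈ T) (s : S) :
    b * a * s ∈ T := by
  have hp : IsIdempotentElem (b * a) := by
    rw [IsIdempotentElem, ← mul_assoc, h.right_mul_left_mul_right]
  have hcorner : b * a * s * (1 - b * a) ∈ T := by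
    refine mem_of_mul_self_eq_zero hT ?_
    calc b * a * s * (1 - b * a) * (b * a * s * (1 - b * a))
        = b * a * s * ((1 - b * a) * (b * a)) * (s * (1 - b * a)) := by simp only [mul_assoc]
      _ = 0 := by rw [hp.one_sub_mul_self, mul_zero, zero_mul]
  have hb : b * a * s * b ∈ T := by
    refine mem_of_mul_self_eq_zero hT ?_
    calc b * a * s * b * (b * a * s * b) = b * a * s * (b * b) * (a * s * b) := by
          simp only [mul_assoc]
      _ = 0 := by rw [h.right_mul_self, mul_zero, zero_mul]
  have ha : a ∈ T := mem_of_mul_self_eq_zero hT h.left_mul_self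
  have hsum : b * a * s = b * a * s * (1 - b * a) + b * a * s * b * a := by noncomm_ring
  rw [hsum]
  exact T.add_mem hcorner (T.mul_mem hb ha)

theorem IsMatrixUnitPair.subring_eq_top (h : IsMatrixUnitPair a b)
    (hd : IsReducedCorner (residualIdempotent a b)) (hS : ElementwisePrime S)
    (hreg : IsVonNeumannRegular S) (hT : ∀ u : Sˣ, (u : S) ∈ T) : T = ⊤ := by
  refine (Subring.eq_top_iff' T).2 fun s => ?_
  by_cases ha : a = 0
  · have hd1 : residualIdempotent a b = 1 := by simp [residualIdempotent, ha]
    by_cases hs : s = 0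
    · exact hs ▸ T.zero_mem
    · exact hT ((hd1 ▸ hd).isUnit_of_ne_zero hS hreg hs).unit
  · obtain ⟨c, e, hce, hd'⟩ := h.exists_mul_eq_residualIdempotent hd hS hreg ha
    have hsum : s = b * a * s + a * b * s + e * c * s := by
      rw [hd', residualIdempotent]
      noncomm_ring
    rw [hsum]
    exact T.add_mem (T.add_mem (h.mul_mem hT s) (h.symm.mul_mem hT s)) (hce.mul_mem hT s)

end UnitSubring

end Rings

section Endomorphisms

variable {A : Type u} [Ring A] {E : Type v} [AddCommGroup E] [Module A E]

/-- A partial endomorphism `f` of `E` is a shift if it is injective and its range is independent of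
its domain; both conditions together say that only `x = 0` satisfies `f x ∈ f.domain`. -/
def IsShift (f : E →ₗ.[A] E) : Prop :=
  ∀ x : f.domain, f x ∈ f.domain → (x : E) = 0

theorem exists_maximal_isShift : ∃ f : E →ₗ.[A] E, Maximal IsShift f := by
  obtain ⟨f, -, hf⟩ := zorn_le_nonempty₀ {f : E →ₗ.[A] E | IsShift f} (fun c hc hchain g hg => by
    refine ⟨LinearPMap.sSup c hchain.directedOn, ?_, fun _ => LinearPMap.le_sSup _⟩
    rintro ⟨x, hx⟩ hfx
    have hdom {y : E} := LinearPMap.mem_domain_sSup_iff ⟨g, hg⟩ hchain.directedOn (x := y)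
    obtain ⟨k, hk, hxk⟩ := hdom.1 hx
    obtain ⟨k', hk', hfxk'⟩ := hdom.1 hfx
    obtain ⟨l, hl, hkl, hkl'⟩ := hchain.directedOn k hk k' hk'
    refine hc hl ⟨x, hkl.1 hxk⟩ ?_
    rw [← LinearPMap.sSup_apply hchain.directedOn hl ⟨x, hkl.1 hxk⟩]
    exact hkl'.1 hfxk') ⊥ (by rintro ⟨x, hx⟩ -; exact hx)
  exact ⟨f, hf⟩

theorem IsShift.injective_coprod {f : E →ₗ.[A] E} (hf : IsShift f) :
    Function.Injective (f.domain.subtype.coprod f.toFun) := by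
  rw [← LinearMap.ker_eq_bot, LinearMap.ker_eq_bot']
  rintro ⟨x, y⟩ hxy
  replace hxy : (x : E) + f y = 0 := hxy
  have hy : y = 0 := Subtype.ext (hf y (by
    rw [eq_neg_of_add_eq_zero_right hxy]
    exact f.domain.neg_mem x.2))
  subst hy
  rw [f.map_zero, add_zero] at hxy
  exact Prod.ext (Subtype.ext hxy) rfl

theorem IsMatrixUnitPair.isShift {a b : Module.End A E} (h : IsMatrixUnitPair a b) :
    IsShift (⟨LinearMap.range (b * a), a.domRestrict _⟩ : E →ₗ.[A] E) := by
  rintro ⟨_, x, rfl⟩ ⟨y, hy⟩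
  replace hy : (b * a) y = a ((b * a) x) := hy
  calc (b * a) x = (b * a * b * a) x := by rw [h.right_mul_left_mul_right]
    _ = b ((b * a) y) := by rw [hy]; rfl
    _ = (b * b) (a y) := rfl
    _ = 0 := by rw [h.right_mul_self, LinearMap.zero_apply]

variable [Small.{v} A] [Module.Injective A E]

theorem NonsingularMod.isVonNeumannRegular_end (hE : NonsingularMod A E) :
    IsVonNeumannRegular (Module.End A E) := by
  intro s
  obtain ⟨K, -, hK⟩ := exists_maximal_disjoint (disjoint_bot_right (a := LinearMap.ker s))
  have hinj : Function.Injective (s ∘ₗ K.subtype) := by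
    rw [← LinearMap.domRestrict, LinearMap.injective_domRestrict_iff]
    exact hK.1.symm
  obtain ⟨t, ht⟩ := Module.Injective.extension_property A E _ _ _ hinj K.subtype
  refine ⟨t, hE.linearMap_ext (essentialSub_sup_of_maximal_disjoint hK)
    (sup_le (fun x hx => ?_) fun x hx => ?_)⟩
  · simp [LinearMap.mem_ker.1 hx]
  · exact congrArg s (LinearMap.congr_fun ht ⟨x, hx⟩)

theorem IsShift.exists_isMatrixUnitPair (hE : NonsingularMod A E) {f : E →ₗ.[A] E}
    (hf : IsShift f) :
    ∃ a b : Module.End A E, IsMatrixUnitPair a b ∧ ∀ x : f.domain, a x = f x ∧ b (f x) = x := by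
  obtain ⟨K, -, hK⟩ := exists_maximal_disjoint
    (disjoint_bot_right (a := LinearMap.range (f.domain.subtype.coprod f.toFun)))
  obtain ⟨a, ha, haK⟩ := exists_extension_vanishing_on hf.injective_coprod hK.1
    (f.toFun ∘ₗ LinearMap.fst A _ _)
  obtain ⟨b, hb, hbK⟩ := exists_extension_vanishing_on hf.injective_coprod hK.1
    (f.domain.subtype ∘ₗ LinearMap.snd A _ _)
  have hax (x : f.domain) : a x = f x := by simpa using ha (x, 0)
  have haf (x : f.domain) : a (f x) = 0 := by simpa using ha (0, x)
  have hbx (x : f.domain) : b x = 0 := by simpa using hb (x, 0)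
  have hbf (x : f.domain) : b (f x) = x := by simpa using hb (0, x)
  have hext {s t : Module.End A E} (hdom : ∀ x : f.domain, s x = t x)
      (hran : ∀ x : f.domain, s (f x) = t (f x)) (hst : ∀ x ∈ K, s x = t x) : s = t := by
    refine hE.linearMap_ext (essentialSub_sup_of_maximal_disjoint hK) (sup_le ?_ hst)
    rintro _ ⟨⟨x, y⟩, rfl⟩
    exact (map_add s _ _).trans ((congrArg₂ _ (hdom x) (hran y)).trans (map_add t _ _).symm)
  refine ⟨a, b, ⟨?_, ?_, ?_, ?_⟩, fun x => ⟨hax x, hbf x⟩⟩ <;>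
    exact hext (by simp [hax, haf, hbx, hbf]) (by simp [hax, haf, hbx, hbf])
      (by simp +contextual [haK, hbK])

theorem exists_isMatrixUnitPair_isReducedCorner (hE : NonsingularMod A E) :
    ∃ a b : Module.End A E,
      IsMatrixUnitPair a b ∧ IsReducedCorner (residualIdempotent a b) := by
  obtain ⟨f, hf⟩ := exists_maximal_isShift (A := A) (E := E)
  obtain ⟨a, b, hab, hfab⟩ := hf.1.exists_isMatrixUnitPair hE
  refine ⟨a, b, hab, fun w hdw hwd hw => ?_⟩
  have hd : ∀ x ∈ f.domain, residualIdempotent a b x = 0 := by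
    intro x hx
    obtain ⟨-, hbf⟩ := hfab ⟨x, hx⟩
    calc residualIdempotent a b x = (residualIdempotent a b * b) (f ⟨x, hx⟩) := by
          rw [Module.End.mul_apply, hbf]
      _ = 0 := by rw [hab.residualIdempotent_mul_right, LinearMap.zero_apply]
  have hw0 : ∀ x ∈ f.domain, w x = 0 := fun x hx => by
    rw [← hwd, Module.End.mul_apply, hd x hx, map_zero]
  obtain ⟨v, hwv, hdv, hvd⟩ := IsMatrixUnitPair.exists_of_mul_self_eq_zero
    hE.isVonNeumannRegular_end hab.isIdempotentElem_residualIdempotent hdw hwd hw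
  obtain ⟨hab', hba⟩ := hab.add hwv hdw hwd hdv hvd
  let g : E →ₗ.[A] E :=
    ⟨LinearMap.range ((b + v) * (a + w)), (a + w).domRestrict _⟩
  have hfg : f ≤ g := by
    refine ⟨fun x hx => ⟨x, ?_⟩, fun x y hxy => ?_⟩
    · obtain ⟨hax, hbf⟩ := hfab ⟨x, hx⟩
      simp [hba, hw0 x hx, hax, hbf]
    · change f x = (a + w) y
      rw [← hxy, LinearMap.add_apply, (hfab x).1, hw0 x x.2, add_zero]
  have hgf : g ≤ f := hf.2 hab'.isShift hfg
  have hav : a * v = 0 := by rw [← hdv, ← mul_assoc, hab.left_mul_residualIdempotent, zero_mul]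
  have hvw : ∀ x, v (w x) ∈ f.domain := by
    intro x
    refine hgf.1 ⟨v (w x), ?_⟩
    have hvw' : (b + v) * (a + w) * (v * w) = v * w := by
      rw [hba, add_mul, mul_assoc b, ← mul_assoc a, hav, zero_mul, mul_zero, zero_add,
        ← mul_assoc, hwv.right_mul_left_mul_right]
    exact LinearMap.congr_fun hvw' x
  ext x
  calc w x = w (v (w x)) := (LinearMap.congr_fun hwv.left_mul_right_mul_left x).symm
    _ = 0 := hw0 _ (hvw x)

theorem subring_end_eq_top (hE : NonsingularMod A E) (hS : ElementwisePrime (Module.End A E))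
    {T : Subring (Module.End A E)} (hT : ∀ u : (Module.End A E)ˣ, (u : Module.End A E) ∈ T) :
    T = ⊤ := by
  obtain ⟨a, b, hab, hd⟩ := exists_isMatrixUnitPair_isReducedCorner hE
  exact hab.subring_eq_top hd hS hE.isVonNeumannRegular_end hT

/-- The subring of the endomorphisms of `E` that map the submodule `N` into itself. -/
def stabilizerSubring (N : Submodule A E) : Subring (Module.End A E) where
  carrier := {s | ∀ x ∈ N, s x ∈ N}
  mul_mem' hs ht x hx := hs _ (ht x hx)
  one_mem' _ hx := hx
  add_mem' hs ht x hx := N.add_mem (hs x hx) (ht x hx)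
  zero_mem' _ _ := N.zero_mem
  neg_mem' hs x hx := N.neg_mem (hs x hx)

theorem HullAutInv.apply_mem_range {M : Type w} [AddCommGroup M] [Module A M] {i : M →ₗ[A] E}
    (hi : HullAutInv i) (hE : NonsingularMod A E) (hS : ElementwisePrime (Module.End A E))
    (s : Module.End A E) (m : M) : s (i m) ∈ LinearMap.range i := by
  have htop : stabilizerSubring (LinearMap.range i) = ⊤ := by
    refine subring_end_eq_top hE hS fun u => ?_
    rintro _ ⟨m, rfl⟩
    exact hi (LinearMap.GeneralLinearGroup.generalLinearEquiv A E u) m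
  exact (Subring.eq_top_iff' _).1 htop s _ ⟨m, rfl⟩

end Endomorphisms

section RightModules

variable {R : Type u} [Ring R] {E : Type v} [AddCommGroup E] [Module Rᵐᵒᵖ E]

theorem map_eq_op_smul_map_one (f : R →ₗ[Rᵐᵒᵖ] E) (r : R) : f r = MulOpposite.op r • f 1 := by
  rw [← map_smul, op_smul_eq_mul, one_mul]

variable [Small.{v} Rᵐᵒᵖ] [Module.Injective Rᵐᵒᵖ E]

theorem exists_end_apply_one_eq {i : R →ₗ[Rᵐᵒᵖ] E} (hi : Function.Injective i) (x : E) :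
    ∃ s : Module.End Rᵐᵒᵖ E, s (i 1) = x := by
  let f : R →ₗ[Rᵐᵒᵖ] E :=
    { toFun := fun r => MulOpposite.op r • x
      map_add' := fun r s => by rw [MulOpposite.op_add, add_smul]
      map_smul' := fun s r => by simp [mul_smul] }
  obtain ⟨s, hs⟩ := Module.Injective.extension_property Rᵐᵒᵖ E _ _ i hi f
  exact ⟨s, by simpa [f] using LinearMap.congr_fun hs 1⟩

theorem ElementwisePrime.end_of_essentialSub_range (hR : ElementwisePrime R)
    {i : R →ₗ[Rᵐᵒᵖ] E} (hi : Function.Injective i) (hess : EssentialSub (LinearMap.range i))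
    (hE : NonsingularMod Rᵐᵒᵖ E) : ElementwisePrime (Module.End Rᵐᵒᵖ E) := by
  have hvalue : ∀ s : Module.End Rᵐᵒᵖ E, s ≠ 0 → ∃ r m, s (i r) = i m ∧ m ≠ 0 := by
    intro s hs
    have hsi : LinearMap.range (s ∘ₗ i) ≠ ⊥ := fun h => hs (hE.linearMap_ext hess (by
      rintro _ ⟨r, rfl⟩
      exact LinearMap.congr_fun (LinearMap.range_eq_bot.1 h) r))
    obtain ⟨_, ⟨r, hr⟩, ⟨m, rfl⟩, hm⟩ := hess.exists_mem_ne_zero hsi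
    exact ⟨r, m, hr, ne_of_apply_ne i (by rwa [map_zero])⟩
  intro s t hst
  by_contra! hne
  obtain ⟨r, m, hr, hm⟩ := hvalue s hne.1
  obtain ⟨r', m', hr', hm'⟩ := hvalue t hne.2
  refine (hR m m' fun c => hi ?_).elim hm hm'
  obtain ⟨u, hu⟩ := exists_end_apply_one_eq hi (i (r * c))
  calc i (m * c * m') = MulOpposite.op m' • MulOpposite.op c • s (i r) := by
        rw [hr, ← map_smul, ← map_smul, op_smul_eq_mul, op_smul_eq_mul]
    _ = s (MulOpposite.op m' • u (i 1)) := by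
        rw [hu, ← map_smul, ← map_smul, ← map_smul, op_smul_eq_mul]
    _ = s (u (t (i r'))) := by rw [hr', map_eq_op_smul_map_one i m', map_smul, map_smul, map_smul]
    _ = i 0 := by rw [map_zero]; exact LinearMap.congr_fun (hst u) (i r')

end RightModules

/-- a prime right nonsingular right automorphism-invariant ring is right
self-injective. -/
theorem prime_nonsingular_autInvariant_selfInjective {R : Type u} [Ring R]
    (hprime : ∀ I J : TwoSidedIdeal R, (∀ x ∈ I, ∀ y ∈ J, x * y = 0) → I = ⊥ ∨ J = ⊥)
    (hns : NonsingularMod Rᵐᵒᵖ R)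
    (hinv : AutInvariant Rᵐᵒᵖ R) :
    Module.Injective Rᵐᵒᵖ R := by
  obtain ⟨E, _, _, i, hi⟩ := exists_isInjectiveHull Rᵐᵒᵖ R
  have := hi.injE
  have hE : NonsingularMod Rᵐᵒᵖ E := hns.of_essentialSub_range hi.inj hi.ess
  have hS : ElementwisePrime (Module.End Rᵐᵒᵖ E) :=
    (elementwisePrime_of_twoSidedIdeal hprime).end_of_essentialSub_range hi.inj hi.ess hE
  have hsurj : Function.Surjective i := by
    intro x
    obtain ⟨s, rfl⟩ := exists_end_apply_one_eq hi.inj x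
    exact (hinv E i hi).apply_mem_range hE hS s 1
  exact .of_ringEquiv (.refl _) (LinearEquiv.ofBijective i ⟨hi.inj, hsurj⟩).symm
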